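/- The function r ↦ (1 − binom(2/r, 1/r)⁻¹)·r is monotone nondecreasing on (0,1], where binom denotes the generalized binomial coefficient; i.e., r ↦ r·(1 − Γ(1/r + 1)²/Γ(2/r + 1)) is nondecreasing for r ∈ (0,1]. -/

import Mathlib

noncomputable def genBinom (x y : ℝ) : ℝ :=
  Real.Gamma (x + 1) / (Real.Gamma (y + 1) * Real.Gamma (x - y + 1))

/-!
Write `c x = (genBinom (2 * x) x)⁻¹`, so that with `x = 1 / r` the claim is that the slope
`(c x - 1) / x` of the line through `(0, 1)` and `(x, c x)` increases with `x ≥ 1`. The Beta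
integral gives `c x = 2 * ∫ t in (0, 1), (x + 1 / 2) * (t * (1 - t)) ^ x`, and since
`t * (1 - t) ≤ 1 / 4` the integrand is convex in `x` from a point below `1` on. Although `c` is not
convex all the way down to `0`, its tangent at `1`, of slope `-1 / 2`, passes exactly through
`(0, 1)`; for a convex function this is enough.
-/

open MeasureTheory Set

theorem monotoneOn_div_sub_of_convexOn {S : Set ℝ} {f : ℝ → ℝ} {a b p f' : ℝ}
    (hf : ConvexOn ℝ S f) (ha : a ∈ S) (hpa : p < a) (hf' : HasDerivWithinAt f f' (Ioi a) a)
    (hb : f a + f' * (p - a) = b) :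
    MonotoneOn (fun x => (f x - b) / (x - p)) (S ∩ Ici a) := by
  rintro x ⟨hxS, hax : a ≤ x⟩ y ⟨hyS, -⟩ hxy
  rcases hxy.eq_or_lt with rfl | hxy
  · rfl
  have hyx : 0 < y - x := sub_pos.2 hxy
  set m := (f y - f x) / (y - x) with hm
  obtain ⟨f'_le, fx_sub_fa_le⟩ : f' ≤ m ∧ f x - f a ≤ m * (x - a) := by
    rcases hax.eq_or_lt with rfl | hax
    · have h := hf.le_slope_of_hasDerivWithinAt_Ioi ha hyS hxy hf'
      rw [slope_def_field] at h
      exact ⟨h, by simp⟩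
    · have f'_le := hf.le_slope_of_hasDerivWithinAt_Ioi ha hxS hax hf'
      rw [slope_def_field] at f'_le
      have slope_le : (f x - f a) / (x - a) ≤ m := hf.slope_mono_adjacent ha hyS hax hxy
      exact ⟨f'_le.trans slope_le, (div_le_iff₀ (sub_pos.2 hax)).1 slope_le⟩
  have fx_sub_b_le : f x - b ≤ m * (x - p) := by
    calc f x - b = f x - f a + f' * (a - p) := by rw [← hb]; ring
      _ ≤ m * (x - a) + m * (a - p) := by gcongr
      _ = m * (x - p) := by ring
  have fy_eq : f y = f x + m * (y - x) := by rw [hm, div_mul_cancel₀ _ hyx.ne']; ring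
  have hxp : 0 < x - p := by linarith
  rw [div_le_div_iff₀ hxp (by linarith)]
  calc (f x - b) * (y - p) = (f x - b) * (x - p) + (f x - b) * (y - x) := by ring
    _ ≤ (f x - b) * (x - p) + m * (x - p) * (y - x) := by gcongr
    _ = (f y - b) * (x - p) := by rw [fy_eq]; ring

theorem convexOn_add_mul_rpow (b : ℝ) {u : ℝ} (hu₀ : 0 < u) (hu₁ : u < 1) :
    ConvexOn ℝ (Ici (-2 / Real.log u - b)) (fun x => (x + b) * u ^ x) := by
  have hlog : Real.log u < 0 := Real.log_neg hu₀ hu₁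
  have hpow (x : ℝ) : HasDerivAt (fun x => u ^ x) (u ^ x * Real.log u) x :=
    (Real.hasStrictDerivAt_const_rpow hu₀ x).hasDerivAt
  have hf' (x : ℝ) : HasDerivAt (fun x => (x + b) * u ^ x)
      ((1 + (x + b) * Real.log u) * u ^ x) x :=
    (((hasDerivAt_id' x).add_const b).mul (hpow x)).congr_deriv (by ring)
  have hf'' (x : ℝ) : HasDerivAt (fun x => (1 + (x + b) * Real.log u) * u ^ x)
      (Real.log u * (2 + (x + b) * Real.log u) * u ^ x) x :=
    (((((hasDerivAt_id' x).add_const b).mul_const _).const_add 1).mul (hpow x)).congr_deriv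
      (by ring)
  refine convexOn_of_hasDerivWithinAt2_nonneg (convex_Ici _)
    (fun x _ => (hf' x).continuousAt.continuousWithinAt)
    (fun x _ => (hf' x).hasDerivWithinAt) (fun x _ => (hf'' x).hasDerivWithinAt) fun x hx => ?_
  have hx : -2 / Real.log u ≤ x + b := sub_le_iff_le_add.1 (interior_subset hx)
  have h2 : 2 + (x + b) * Real.log u ≤ 0 := by
    linarith [(div_le_iff_of_neg hlog).1 hx]
  exact mul_nonneg (mul_nonneg_of_nonpos_of_nonpos hlog.le h2) (by positivity)

theorem beta_eq_integral_rpow {α β : ℝ} (hα : 0 < α) (hβ : 0 < β) :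
    ProbabilityTheory.beta α β = ∫ t in Ioo 0 1, t ^ (α - 1) * (1 - t) ^ (β - 1) := by
  have ofReal_integrand : EqOn
      (fun t : ℝ => (t : ℂ) ^ ((α : ℂ) - 1) * (1 - (t : ℂ)) ^ ((β : ℂ) - 1))
      (fun t => ((t ^ (α - 1) * (1 - t) ^ (β - 1) : ℝ) : ℂ)) (Ioo 0 1) := fun t ht => by
    simp [Complex.ofReal_cpow ht.1.le, Complex.ofReal_cpow (sub_nonneg.2 ht.2.le)]
  rw [ProbabilityTheory.beta_eq_betaIntegralReal α β hα hβ, Complex.betaIntegral,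
    intervalIntegral.integral_of_le zero_le_one, integral_Ioc_eq_integral_Ioo,
    setIntegral_congr_fun measurableSet_Ioo ofReal_integrand, integral_complex_ofReal,
    Complex.ofReal_re]

theorem inv_genBinom_eq_integral {x y : ℝ} (hy : -1 < y) (hyx : -1 < x - y) (hx : x + 1 ≠ 0) :
    (genBinom x y)⁻¹ = (x + 1) * ∫ t in Ioo 0 1, t ^ y * (1 - t) ^ (x - y) := by
  have h := beta_eq_integral_rpow (neg_lt_iff_pos_add.1 hy) (neg_lt_iff_pos_add.1 hyx)
  simp only [add_sub_cancel_right] at h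
  rw [← h, ProbabilityTheory.beta, genBinom, inv_div,
    show y + 1 + (x - y + 1) = x + 1 + 1 by ring, Real.Gamma_add_one hx]
  field_simp

theorem inv_genBinom_two_mul_eq_integral {x : ℝ} (hx : -1 / 2 < x) :
    (genBinom (2 * x) x)⁻¹ = 2 * ∫ t in Ioo 0 1, (x + 1 / 2) * (t * (1 - t)) ^ x := by
  rw [inv_genBinom_eq_integral (by linarith) (by linarith) (by linarith), integral_const_mul,
    show 2 * x - x = x by ring, ← mul_assoc, show 2 * (x + 1 / 2) = 2 * x + 1 by ring]
  congr 1
  exact setIntegral_congr_fun measurableSet_Ioo fun t ht =>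
    (Real.mul_rpow ht.1.le (sub_nonneg.2 ht.2.le)).symm

theorem integrableOn_mul_one_sub_rpow {x : ℝ} (hx : 0 ≤ x) :
    IntegrableOn (fun t : ℝ => (t * (1 - t)) ^ x) (Ioo 0 1) := by
  have hcont : Continuous fun t : ℝ => (t * (1 - t)) ^ x :=
    (Real.continuous_rpow_const hx).comp (by fun_prop)
  exact (hcont.integrableOn_Icc (a := 0) (b := 1)).mono_set Ioo_subset_Icc_self

theorem convexOn_inv_genBinom_two_mul :
    ConvexOn ℝ (Ici (1 / Real.log 2 - 1 / 2)) (fun x => (genBinom (2 * x) x)⁻¹) := by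
  have hlog2 : 0 < Real.log 2 := Real.log_pos one_lt_two
  have domain_pos : ∀ x ∈ Ici (1 / Real.log 2 - 1 / 2), 0 < x := fun x hx => by
    have : 1 < 1 / Real.log 2 := (one_lt_div hlog2).2 (Real.log_two_lt_d9.trans (by norm_num))
    linarith [mem_Ici.1 hx]
  have convexOn_integrand : ∀ t ∈ Ioo (0 : ℝ) 1,
      ConvexOn ℝ (Ici (1 / Real.log 2 - 1 / 2)) (fun x => (x + 1 / 2) * (t * (1 - t)) ^ x) := by
    intro t ht
    have hpos : 0 < t * (1 - t) := mul_pos ht.1 (sub_pos.2 ht.2)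
    have hle : t * (1 - t) ≤ (2 ^ 2)⁻¹ := by linarith [sq_nonneg (t - 1 / 2)]
    have hlog : Real.log (t * (1 - t)) ≤ -2 * Real.log 2 := by
      simpa using Real.log_le_log hpos hle
    refine (convexOn_add_mul_rpow _ hpos (hle.trans_lt (by norm_num))).subset
      (Ici_subset_Ici.2 (sub_le_sub_right ?_ _)) (convex_Ici _)
    rw [div_le_iff_of_neg (by linarith), div_mul_eq_mul_div, div_le_iff₀ hlog2]
    linarith
  have convexOn_integral := integral_convexOn_of_integrand_ae (convex_Ici _)
    ((ae_restrict_iff' (μ := volume) measurableSet_Ioo).2 (.of_forall convexOn_integrand))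
    fun x hx => (integrableOn_mul_one_sub_rpow (domain_pos x hx).le).const_mul _
  exact (convexOn_integral.smul zero_le_two).congr fun x hx =>
    (inv_genBinom_two_mul_eq_integral (by linarith [domain_pos x hx])).symm

theorem genBinom_natCast {n k : ℕ} (hk : k ≤ n) : genBinom n k = n.choose k := by
  rw [genBinom, ← Nat.cast_sub hk, Nat.cast_choose ℝ hk]
  simp only [Real.Gamma_nat_eq_factorial]

theorem inv_genBinom_two_mul (x : ℝ) :
    (genBinom (2 * x) x)⁻¹ = Real.Gamma (x + 1) ^ 2 / Real.Gamma (2 * x + 1) := by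
  rw [genBinom, inv_div, show 2 * x - x = x by ring, sq]

theorem hasDerivAt_inv_genBinom_two_mul_nat (n : ℕ) :
    HasDerivAt (fun x => (genBinom (2 * x) x)⁻¹)
      (2 * (harmonic n - harmonic (2 * n)) / n.centralBinom) n := by
  have hnum : HasDerivAt (fun x => Real.Gamma (x + 1)) _ (n : ℝ) :=
    (Real.hasDerivAt_Gamma_nat n).comp_add_const _ _
  have hGamma := Real.hasDerivAt_Gamma_nat (2 * n)
  push_cast at hGamma
  have hden : HasDerivAt (fun x => Real.Gamma (2 * x + 1)) _ (n : ℝ) :=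
    HasDerivAt.comp (h₂ := Real.Gamma) (n : ℝ) hGamma
      (((hasDerivAt_id' (n : ℝ)).const_mul 2).add_const 1)
  have Gamma_two_mul : Real.Gamma (2 * n + 1) = (2 * n).factorial := by
    exact_mod_cast Real.Gamma_nat_eq_factorial (2 * n)
  simp only [inv_genBinom_two_mul]
  refine ((hnum.pow 2).div hden (by rw [Gamma_two_mul]; positivity)).congr_deriv ?_
  rw [Nat.centralBinom_eq_two_mul_choose, Nat.cast_choose ℝ (by lia : n ≤ 2 * n),
    show 2 * n - n = n by lia]
  simp only [Gamma_two_mul, Real.Gamma_nat_eq_factorial, Pi.pow_apply]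
  field_simp
  ring

theorem monotoneOn_inv_genBinom_two_mul_sub_one_div :
    MonotoneOn (fun x => ((genBinom (2 * x) x)⁻¹ - 1) / x) (Ici 1) := by
  have domain_le_one : 1 / Real.log 2 - 1 / 2 ≤ 1 := by
    have : 1 / Real.log 2 ≤ 1 / (2 / 3) :=
      one_div_le_one_div_of_le (by norm_num) (le_trans (by norm_num) Real.log_two_gt_d9.le)
    linarith
  have hderiv : HasDerivAt (fun x => (genBinom (2 * x) x)⁻¹) (-1 / 2) 1 := by
    have h := hasDerivAt_inv_genBinom_two_mul_nat 1
    rw [Nat.cast_one] at h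
    exact h.congr_deriv (by norm_num [harmonic_succ, Nat.centralBinom])
  have tangent_at_zero : (genBinom (2 * 1) 1)⁻¹ + -1 / 2 * (0 - 1) = 1 := by
    have h : genBinom 2 1 = 2 := by simpa using genBinom_natCast one_le_two
    norm_num [h]
  have h := monotoneOn_div_sub_of_convexOn convexOn_inv_genBinom_two_mul domain_le_one zero_lt_one
    hderiv.hasDerivWithinAt tangent_at_zero
  simp only [sub_zero] at h
  exact h.mono (subset_inter (Ici_subset_Ici.2 domain_le_one) subset_rfl)

theorem central_binom_factor_monotone :
    MonotoneOn (fun r : ℝ => (1 - (genBinom (2 / r) (1 / r))⁻¹) * r) (Set.Ioc 0 1) := by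
  intro r hr s hs hrs
  have h := monotoneOn_inv_genBinom_two_mul_sub_one_div (one_le_one_div hs.1 hs.2)
    (one_le_one_div hr.1 hr.2) (one_div_le_one_div_of_le hr.1 hrs)
  simp only [mul_one_div, div_div_eq_mul_div, div_one] at h
  linarith
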